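/- arXiv:1211.5122 — 2 statements merged into one kernel-verified Lean document; each statement's English description precedes it below -/
import Mathlib

section
/- If T is a tree, then for any assignment of lists L_v of size 2 of real numbers to the vertices of T, there exists a vertex weighting w with w(v) ∈ L_v for each v such that for every edge uv, the sum of w over the neighbours of u differs from the sum of w over the neighbours of v. That is, ch^v_Σ(T) ≤ 2. -/
open Finset

/-!
If `ε = ±1` is the sign of a 2-colouring of a bipartite graph, then the weighting `w = ε • y` has
neighbourhood sums `-ε u • ∑ x ∈ N(u), y x`, so it separates the endpoints of `uv` exactly when
the linear form `∑ x ∈ N(u), y x + ∑ x ∈ N(v), y x` does not vanish. All these forms have natural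
number coefficients, so no cancellation can occur in their product: picking from the form of each
edge the variable of its head, for some orientation of the edges, gives a monomial of top degree
with nonzero coefficient, in which each variable has its in-degree as exponent. By the
combinatorial Nullstellensatz, lists larger than the in-degrees suffice. A forest oriented away
from a root in each component has in-degrees at most one.
-/

section Polynomial

open MvPolynomial

lemma coeff_mul_coeff_le_coeff_mul {σ R : Type*} [CommSemiring R] [PartialOrder R]
    [CanonicallyOrderedAdd R] (p q : MvPolynomial σ R) (m n : σ →₀ ℕ) :
    p.coeff m * q.coeff n ≤ (p * q).coeff (m + n) := by
  classical
  rw [coeff_mul]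
  have hmn : (m, n) ∈ antidiagonal (m + n) := mem_antidiagonal.2 rfl
  exact single_le_sum_of_canonicallyOrdered (f := fun k ↦ p.coeff k.1 * q.coeff k.2) hmn

lemma prod_coeff_le_coeff_prod {ι σ R : Type*} [CommSemiring R] [PartialOrder R]
    [CanonicallyOrderedAdd R] (s : Finset ι) (p : ι → MvPolynomial σ R) (m : ι → σ →₀ ℕ) :
    ∏ i ∈ s, (p i).coeff (m i) ≤ (∏ i ∈ s, p i).coeff (∑ i ∈ s, m i) := by
  classical
  induction s using Finset.induction_on with
  | empty => simp
  | insert i s hi ih =>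
    rw [prod_insert hi, prod_insert hi, sum_insert hi]
    exact (mul_le_mul_right ih _).trans (coeff_mul_coeff_le_coeff_mul _ _ _ _)

theorem exists_forall_aeval_ne_zero {ι σ R : Type*} [Finite σ] [CommRing R] [IsDomain R]
    [CharZero R] (s : Finset ι) (p : ι → MvPolynomial σ ℕ) (m : ι → σ →₀ ℕ)
    (hdeg : ∀ i ∈ s, (p i).totalDegree ≤ (m i).degree) (hcoeff : ∀ i ∈ s, (p i).coeff (m i) ≠ 0)
    (L : σ → Finset R) (hL : ∀ v, (∑ i ∈ s, m i) v < #(L v)) :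
    ∃ y : σ → R, (∀ v, y v ∈ L v) ∧ ∀ i ∈ s, aeval y (p i) ≠ 0 := by
  set P : MvPolynomial σ R := map (algebraMap ℕ R) (∏ i ∈ s, p i) with hP
  have hPcoeff : P.coeff (∑ i ∈ s, m i) ≠ 0 := by
    rw [coeff_map, eq_natCast, Nat.cast_ne_zero, ← Nat.pos_iff_ne_zero]
    exact (prod_pos fun i hi ↦ Nat.pos_of_ne_zero (hcoeff i hi)).trans_le
      (prod_coeff_le_coeff_prod s p m)
  have hPdeg : P.totalDegree = (∑ i ∈ s, m i).degree := by
    refine le_antisymm ?_ (le_totalDegree (mem_support_iff.2 hPcoeff))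
    calc P.totalDegree ≤ (∏ i ∈ s, p i).totalDegree := sup_mono (support_map_subset _ _)
      _ ≤ ∑ i ∈ s, (p i).totalDegree := totalDegree_finsetProd _ _
      _ ≤ ∑ i ∈ s, (m i).degree := sum_le_sum hdeg
      _ = (∑ i ∈ s, m i).degree := (map_sum Finsupp.degree m s).symm
  obtain ⟨y, hyL, hy⟩ :=
    combinatorial_nullstellensatz_exists_eval_nonzero P _ hPcoeff hPdeg L hL
  refine ⟨y, hyL, prod_ne_zero_iff.1 ?_⟩
  rwa [hP, eval_map, ← aeval_def, map_prod] at hy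

end Polynomial

section AdditiveColoring

variable {V R : Type*} (G : SimpleGraph V)

/-- A vertex weighting is an additive colouring of a graph if adjacent vertices have distinct sums
of weights over their neighbourhoods. -/
def IsAdditiveColoring [G.LocallyFinite] [AddCommMonoid R] (w : V → R) : Prop :=
  ∀ u v, G.Adj u v → ∑ x ∈ G.neighborFinset u, w x ≠ ∑ x ∈ G.neighborFinset v, w x

variable {G}

lemma exists_sign_of_isBipartite (hG : G.IsBipartite) :
    ∃ ε : V → ℤˣ, ∀ u v, G.Adj u v → ε v = -ε u := by
  obtain ⟨c⟩ := hG
  refine ⟨fun v ↦ (-1) ^ (c v : ℕ), fun u v huv ↦ ?_⟩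
  have hsign : ∀ i j : Fin 2, i ≠ j → (-1 : ℤˣ) ^ (j : ℕ) = -(-1) ^ (i : ℕ) := by decide
  exact hsign _ _ (c.valid huv)

lemma sum_neighborFinset_sign_smul [G.LocallyFinite] [AddCommGroup R] {ε : V → ℤˣ}
    (hε : ∀ u v, G.Adj u v → ε v = -ε u) (y : V → R) (u : V) :
    ∑ x ∈ G.neighborFinset u, ε x • y x = -ε u • ∑ x ∈ G.neighborFinset u, y x := by
  rw [smul_sum]
  refine sum_congr rfl fun x hx ↦ ?_
  rw [hε u x ((G.mem_neighborFinset u x).1 hx)]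

lemma isAdditiveColoring_sign_smul_iff [G.LocallyFinite] [AddCommGroup R] {ε : V → ℤˣ}
    (hε : ∀ u v, G.Adj u v → ε v = -ε u) (y : V → R) :
    IsAdditiveColoring G (fun v ↦ ε v • y v) ↔ ∀ u v, G.Adj u v →
      ∑ x ∈ G.neighborFinset u, y x + ∑ x ∈ G.neighborFinset v, y x ≠ 0 := by
  refine forall₃_congr fun u v huv ↦ not_congr ?_
  rw [sum_neighborFinset_sign_smul hε, sum_neighborFinset_sign_smul hε, hε u v huv, neg_neg,
    Units.neg_smul, neg_eq_iff_add_eq_zero, ← smul_add, smul_eq_zero_iff_eq]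

/-- The darts in `D` orient the edges of `G`, so that `#{d ∈ D | d.snd = v}` is the in-degree of
`v`. -/
theorem exists_forall_adj_sum_add_sum_ne_zero [Finite V] [DecidableEq V] [G.LocallyFinite]
    [CommRing R] [IsDomain R] [CharZero R] (D : Finset G.Dart) (hD : ∀ d, d ∈ D ∨ d.symm ∈ D)
    (L : V → Finset R) (hL : ∀ v, #{d ∈ D | d.snd = v} < #(L v)) :
    ∃ y : V → R, (∀ v, y v ∈ L v) ∧ ∀ u v, G.Adj u v →
      ∑ x ∈ G.neighborFinset u, y x + ∑ x ∈ G.neighborFinset v, y x ≠ 0 := by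
  let N (v : V) : MvPolynomial V ℕ := ∑ x ∈ G.neighborFinset v, .X x
  have hdeg (v : V) : (N v).totalDegree ≤ 1 :=
    MvPolynomial.totalDegree_finsetSum_le fun x _ ↦ (MvPolynomial.totalDegree_X x).le
  have hcoeff {u v : V} (huv : G.Adj u v) : (N u).coeff (Finsupp.single v 1) ≠ 0 := by
    simp [N, MvPolynomial.coeff_sum, MvPolynomial.coeff_X, Finsupp.single_left_inj, huv]
  obtain ⟨y, hyL, hy⟩ := exists_forall_aeval_ne_zero D (fun d ↦ N d.fst + N d.snd)
    (fun d ↦ Finsupp.single d.snd 1)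
    (fun d _ ↦ by
      simpa using (MvPolynomial.totalDegree_add _ _).trans (max_le (hdeg d.fst) (hdeg d.snd)))
    (fun d _ ↦ by simp [hcoeff d.adj])
    L (fun v ↦ by simpa [Finsupp.finsetSum_apply, Finsupp.single_apply] using hL v)
  refine ⟨y, hyL, fun u v huv ↦ ?_⟩
  rcases hD ⟨(u, v), huv⟩ with huvD | hvuD
  · simpa [N] using hy _ huvD
  · simpa [N, add_comm] using hy _ hvuD

theorem exists_isAdditiveColoring_of_isBipartite [Finite V] [DecidableEq V] [G.LocallyFinite]
    [CommRing R] [IsDomain R] [CharZero R] (hG : G.IsBipartite)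
    (D : Finset G.Dart) (hD : ∀ d, d ∈ D ∨ d.symm ∈ D)
    (L : V → Finset R) (hL : ∀ v, #{d ∈ D | d.snd = v} < #(L v)) :
    ∃ w : V → R, (∀ v, w v ∈ L v) ∧ IsAdditiveColoring G w := by
  classical
  obtain ⟨ε, hε⟩ := exists_sign_of_isBipartite hG
  obtain ⟨y, hyL, hy⟩ := exists_forall_adj_sum_add_sum_ne_zero D hD
    (fun v ↦ (L v).image (ε v • ·))
    (fun v ↦ by simpa [card_image_of_injective _ (MulAction.injective (ε v))] using hL v)
  refine ⟨fun v ↦ ε v • y v, fun v ↦ ?_, (isAdditiveColoring_sign_smul_iff hε y).2 hy⟩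
  obtain ⟨a, haL, hay⟩ := mem_image.1 (hyL v)
  simpa only [← hay, smul_smul, Int.units_mul_self, one_smul] using haL

end AdditiveColoring

section Forest

variable {V : Type*} {G : SimpleGraph V}

lemma eq_penultimate_of_dist_eq_add_one (hG : G.IsAcyclic) {r u v : V} {p : G.Walk r v}
    (hp : p.IsPath) (huv : G.Adj u v) (hdist : G.dist r v = G.dist r u + 1) :
    u = p.penultimate := by
  have hru : G.Reachable r u := p.reachable.trans huv.symm.reachable
  obtain ⟨q, hq⟩ := hru.exists_walk_length_eq_dist
  have hqv : (q.concat huv).IsPath :=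
    (q.concat huv).isPath_of_length_eq_dist (by rw [q.length_concat, hq, hdist])
  have hpq : p = q.concat huv :=
    congrArg Subtype.val ((hG.subsingleton_path r v).elim ⟨p, hp⟩ ⟨_, hqv⟩)
  rw [hpq, q.penultimate_concat]

theorem exists_dart_orientation_of_isAcyclic [Finite V] [DecidableEq V] (hG : G.IsAcyclic) :
    ∃ D : Finset G.Dart, (∀ d, d ∈ D ∨ d.symm ∈ D) ∧ ∀ v, #{d ∈ D | d.snd = v} ≤ 1 := by
  classical
  have := Fintype.ofFinite V
  let root (v : V) : V := (G.connectedComponentMk v).out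
  have hroot (v : V) : G.Reachable (root v) v :=
    SimpleGraph.ConnectedComponent.exact (Quot.out_eq _)
  have root_eq (d : G.Dart) : root d.fst = root d.snd :=
    congrArg Quot.out (SimpleGraph.ConnectedComponent.sound d.adj.reachable)
  let D : Finset G.Dart := {d | G.dist (root d.snd) d.snd = G.dist (root d.snd) d.fst + 1}
  have mem_D {d : G.Dart} :
      d ∈ D ↔ G.dist (root d.snd) d.snd = G.dist (root d.snd) d.fst + 1 := by simp [D]
  refine ⟨D, fun d ↦ ?_, fun v ↦ card_le_one.2 fun d hd e he ↦ ?_⟩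
  · have := hG.dist_eq_dist_add_one_of_adj_of_reachable (root d.snd) d.adj.symm (hroot d.snd)
    simpa [mem_D, root_eq] using this
  · simp only [mem_filter, mem_D] at hd he
    obtain ⟨hd, rfl⟩ := hd
    obtain ⟨he, hsnd⟩ := he
    rw [hsnd] at he
    obtain ⟨p, hp⟩ := (hroot d.snd).exists_isPath
    have hfst : d.fst = e.fst :=
      (eq_penultimate_of_dist_eq_add_one hG hp d.adj hd).trans
        (eq_penultimate_of_dist_eq_add_one hG hp (hsnd ▸ e.adj) he).symm
    exact SimpleGraph.Dart.ext _ _ (Prod.ext hfst hsnd.symm)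

end Forest

theorem tree_additive_choosability_two_general {V R : Type*} [Finite V] [CommRing R]
    [IsDomain R] [CharZero R] (G : SimpleGraph V) [G.LocallyFinite]
    (hG : G.IsAcyclic) (L : V → Finset R) (hL : ∀ v, 2 ≤ #(L v)) :
    ∃ w : V → R, (∀ v, w v ∈ L v) ∧ IsAdditiveColoring G w := by
  classical
  obtain ⟨D, hD, hindeg⟩ := exists_dart_orientation_of_isAcyclic hG
  exact exists_isAdditiveColoring_of_isBipartite hG.isBipartite D hD L
    fun v ↦ (hindeg v).trans_lt (hL v)

/-- If `T` is a tree, then for any assignment of lists of two real numbers to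
the vertices there is a choice of vertex weights from the lists such that
adjacent vertices receive distinct sums of weights over their neighbourhoods:
`ch^v_Σ(T) ≤ 2`. -/
theorem tree_additive_choosability_two {V : Type*} [Fintype V] [DecidableEq V]
    (T : SimpleGraph V) [DecidableRel T.Adj]
    (hconn : T.Connected) (hacyclic : T.IsAcyclic)
    (L : V → Finset ℝ) (hL : ∀ v, (L v).card = 2) :
    ∃ w : V → ℝ, (∀ v, w v ∈ L v) ∧
      ∀ u v, T.Adj u v →
        (∑ x ∈ T.neighborFinset u, w x) ≠ (∑ x ∈ T.neighborFinset v, w x) :=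
  tree_additive_choosability_two_general T hacyclic L fun v ↦ (hL v).ge
end

section
/- If G is a d-regular bipartite graph with d ≥ 3, then χ^e_Σ(G) ≤ 2: there is an edge weighting with weights in {1,2} such that adjacent vertices receive distinct sums of incident edge weights. -/
open Finset

/-!
Write a weighting as `1 + F`, where `F` is a set of edges. The sums at adjacent vertices differ as
soon as their degrees in `F` have different parities, and in a connected graph the parities of the
degrees can be prescribed freely, subject to their sum being even. Let `A` and `B` be the sides of a
connected `G`. If `A` is even, take `F` with odd degrees exactly on `A`. If `A` is odd, choose
`z ∈ A` and take `F` with odd degrees exactly on `A \ {z}` that avoids `z` and meets all its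
neighbours.

Such an `F` exists for a suitable `z`. Call `|K ∩ A| - |K ∩ B|` the surplus of `K`. If `K` is a
union of components of `G - N[z]`, then `d` times its surplus counts the edges between `K` and
`N(z)`, so the surplus is positive, and for `G - N[z]` it is `d - 1`. Call a neighbour `a` of `z`
scattered if its other `d - 1` neighbours lie in different components of `G - N[z]`. If `a` is not
scattered, then adding to `F` a cycle that meets `N[z]` only in `a` makes `F` meet `a`. If `a` is
scattered, then each component of `G - N[z]` has surplus `1` and is joined to `a`. By an extremal
argument, some `z` has no scattered neighbour, or it has a twin `z'` with `N(z') = N(z)`. In the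
latter case `F` may contain all edges at `z'`, or all but one if `d` is even: the rest of the graph
is connected through the scattered neighbour.
-/

namespace RegularBipartite

variable {V : Type*} {G H : SimpleGraph V} {S : Finset V} {a b u v x y z : V}

section EdgeSpace

/-- The edge space of `G` over `ZMod 2`: a set of edges is encoded by its symmetric indicator
matrix, so that `F x` is the set of neighbours that it joins to `x`. -/
def edgeSpace (G : SimpleGraph V) : Submodule (ZMod 2) (V → V → ZMod 2) where
  carrier := {F | (∀ x y, F x y = F y x) ∧ ∀ x y, F x y ≠ 0 → G.Adj x y}
  zero_mem' := by simp
  add_mem' := by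
    rintro F F' ⟨hsymm, hadj⟩ ⟨hsymm', hadj'⟩
    refine ⟨fun x y ↦ by simp [hsymm x y, hsymm' x y], fun x y h ↦ ?_⟩
    by_contra hxy
    exact h (by simp [not_not.1 (mt (hadj x y) hxy), not_not.1 (mt (hadj' x y) hxy)])
  smul_mem' := by
    rintro c F ⟨hsymm, hadj⟩
    exact ⟨fun x y ↦ by simp [hsymm x y], fun x y h ↦ hadj x y (right_ne_zero_of_mul h)⟩

theorem edgeSpace_mono (h : G ≤ H) : edgeSpace G ≤ edgeSpace H :=
  fun _ hF ↦ ⟨hF.1, fun x y hxy ↦ h (hF.2 x y hxy)⟩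

theorem apply_eq_zero_of_not_adj {F : V → V → ZMod 2} (hF : F ∈ edgeSpace G)
    (h : ¬ G.Adj x y) : F x y = 0 :=
  not_not.1 (mt (hF.2 x y) h)

variable [Fintype V]

/-- The boundary of a set of edges: the parities of the degrees of the vertices. -/
def boundary : (V → V → ZMod 2) →ₗ[ZMod 2] (V → ZMod 2) where
  toFun F x := ∑ y, F x y
  map_add' F F' := by ext; simp [sum_add_distrib]
  map_smul' c F := by ext; simp [mul_sum]

theorem boundary_apply (F : V → V → ZMod 2) (x : V) : boundary F x = ∑ y, F x y := rfl

theorem boundary_apply_eq_zero {F : V → V → ZMod 2} (h : F x = 0) : boundary F x = 0 := by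
  simp [boundary_apply, h]

theorem sum_boundary {F : V → V → ZMod 2} (hF : F ∈ edgeSpace G) : ∑ x, boundary F x = 0 := by
  simp only [boundary_apply, ← sum_product', univ_product_univ]
  refine sum_involution (fun p _ ↦ p.swap) (fun p _ ↦ ?_) (fun p _ hp hswap ↦ ?_) (by simp)
    (by simp)
  · rw [Prod.fst_swap, Prod.snd_swap, hF.1 p.2 p.1, CharTwo.add_self_eq_zero]
  · exact (hF.2 _ _ hp).ne (congrArg Prod.snd hswap)

variable [DecidableEq V]

/-- The set of edges that join `a` to the vertices of `T`. -/
def spokes (a : V) (T : Finset V) : V → V → ZMod 2 :=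
  fun x y ↦ if x = a ∧ y ∈ T ∨ y = a ∧ x ∈ T then 1 else 0

omit [Fintype V] in
theorem spokes_mem_edgeSpace {T : Finset V} (hT : ∀ y ∈ T, G.Adj a y) :
    spokes a T ∈ edgeSpace G := by
  refine ⟨fun x y ↦ if_congr or_comm rfl rfl, fun x y h ↦ ?_⟩
  obtain ⟨rfl, hy⟩ | ⟨rfl, hx⟩ := of_not_not fun hxy ↦ h (if_neg hxy)
  exacts [hT y hy, (hT x hx).symm]

omit [Fintype V] in
theorem spokes_apply_of_mem {T : Finset V} (h : y ∈ T) : spokes a T a y = 1 :=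
  if_pos (.inl ⟨rfl, h⟩)

omit [Fintype V] in
theorem spokes_apply_of_notMem {T : Finset V} (hxa : x ≠ a) (h : x ∉ T) :
    spokes a T x = 0 := by
  ext; simp [spokes, hxa, h]

theorem boundary_spokes_apply_center {T : Finset V} (h : a ∉ T) :
    boundary (spokes a T) a = #T := by
  simp [boundary_apply, spokes, h]

theorem boundary_spokes {T : Finset V} (h : a ∉ T) :
    boundary (spokes a T) = Pi.single a (#T : ZMod 2) + ∑ y ∈ T, Pi.single y 1 := by
  ext x
  by_cases hx : x = a
  · subst hx
    simp [boundary_spokes_apply_center, h, Pi.single_apply]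
  · simp [boundary_apply, spokes, hx, Pi.single_apply, ite_and]

theorem exists_boundary_eq_of_reachable (h : G.Reachable u v) :
    ∃ F ∈ edgeSpace G, boundary F = Pi.single u 1 + Pi.single v 1 := by
  obtain ⟨p⟩ := h
  induction p with
  | nil => exact ⟨0, zero_mem _, by rw [map_zero, ZModModule.add_self]⟩
  | @cons u w v huw _ ih =>
    obtain ⟨F, hF, hFb⟩ := ih
    refine ⟨spokes u {w} + F, add_mem (spokes_mem_edgeSpace (by simpa using huw)) hF, ?_⟩
    rw [map_add, hFb, boundary_spokes (by simpa using huw.ne), card_singleton, sum_singleton,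
      Nat.cast_one, add_assoc, ← add_assoc (Pi.single w 1), ZModModule.add_self, zero_add]

omit [DecidableEq V] in
theorem exists_boundary_eq {t : V → ZMod 2} (ht : ∑ x, t x = 0)
    (hreach : ∀ x y, t x ≠ 0 → t y ≠ 0 → G.Reachable x y) :
    ∃ F ∈ edgeSpace G, boundary F = t := by
  classical
  by_cases h : t = 0
  · exact ⟨0, zero_mem _, by rw [h, map_zero]⟩
  obtain ⟨r, hr⟩ := Function.ne_iff.1 h
  have hpath (x : V) : ∃ F ∈ edgeSpace G,
      boundary F = t x • (Pi.single x 1 + Pi.single r 1) := by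
    by_cases hx : t x = 0
    · exact ⟨0, zero_mem _, by simp [hx]⟩
    · obtain ⟨F, hF, hFb⟩ := exists_boundary_eq_of_reachable (hreach x r hx hr)
      exact ⟨t x • F, Submodule.smul_mem _ _ hF, by rw [map_smul, hFb]⟩
  choose F hF hFb using hpath
  refine ⟨∑ x, F x, sum_mem fun x _ ↦ hF x, ?_⟩
  simp only [map_sum, hFb, smul_add, sum_add_distrib, ← sum_smul, ht, zero_smul, add_zero]
  ext y
  simp [Pi.single_apply]

end EdgeSpace

section Isolate

/-- The graph `G - S`, on the vertex set of `G`: all edges that meet `S` are removed. -/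
def isolate (G : SimpleGraph V) (S : Finset V) : SimpleGraph V where
  Adj x y := G.Adj x y ∧ x ∉ S ∧ y ∉ S
  symm := ⟨fun _ _ h ↦ ⟨h.1.symm, h.2.2, h.2.1⟩⟩
  loopless := ⟨fun _ h ↦ h.1.ne rfl⟩

theorem isolate_le (G : SimpleGraph V) (S : Finset V) : isolate G S ≤ G := fun _ _ h ↦ h.1

theorem apply_eq_zero_of_mem_isolate {F : V → V → ZMod 2} (hF : F ∈ edgeSpace (isolate G S))
    (hx : x ∈ S) : F x = 0 := by
  ext y
  exact apply_eq_zero_of_not_adj hF fun h ↦ h.2.1 hx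

variable [Fintype V] [DecidableEq V]

omit [DecidableEq V] in
theorem exists_boundary_eq_of_eqOn {t : V → ZMod 2} {F₀ : V → V → ZMod 2}
    (hreach : ∀ x y, x ∉ S → y ∉ S → (isolate G S).Reachable x y) (hF₀ : F₀ ∈ edgeSpace G)
    (ht : ∑ x, t x = 0) (htS : ∀ x ∈ S, boundary F₀ x = t x) :
    ∃ F ∈ edgeSpace G, boundary F = t ∧ ∀ x ∈ S, F x = F₀ x := by
  classical
  have hsum : ∑ x, (t - boundary F₀) x = 0 := by
    simp only [Pi.sub_apply, sum_sub_distrib, ht, sum_boundary hF₀, sub_zero]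
  have hsupp (x : V) (hx : (t - boundary F₀) x ≠ 0) : x ∉ S :=
    fun hxS ↦ hx (sub_eq_zero.2 (htS x hxS).symm)
  obtain ⟨J, hJ, hJb⟩ := exists_boundary_eq hsum fun x y hx hy ↦
    hreach x y (hsupp x hx) (hsupp y hy)
  refine ⟨F₀ + J, add_mem hF₀ (edgeSpace_mono (isolate_le G S) hJ), ?_, fun x hx ↦ ?_⟩
  · rw [map_add, hJb, add_sub_cancel]
  · rw [Pi.add_apply, apply_eq_zero_of_mem_isolate hJ hx, add_zero]

end Isolate

section Sealed

/-- `K` is a union of components of `G - S`. -/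
structure IsSealed (G : SimpleGraph V) (S K : Finset V) : Prop where
  disjoint : Disjoint K S
  mem_or_mem : ∀ ⦃x y⦄, x ∈ K → G.Adj x y → y ∈ K ∨ y ∈ S

variable {K : Finset V}

theorem isSealed_biUnion [DecidableEq V] {ι : Type*} {s : Finset ι} {K : ι → Finset V}
    (h : ∀ i ∈ s, IsSealed G S (K i)) : IsSealed G S (s.biUnion K) where
  disjoint := (disjoint_biUnion_left _ _ _).2 fun i hi ↦ (h i hi).disjoint
  mem_or_mem x y hx hxy := by
    obtain ⟨i, hi, hxi⟩ := mem_biUnion.1 hx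
    exact ((h i hi).mem_or_mem hxi hxy).imp_left fun hyi ↦ mem_biUnion.2 ⟨i, hi, hyi⟩

namespace IsSealed

theorem exists_adj (hK : IsSealed G S K) (hG : G.Connected) (hKne : K.Nonempty)
    (hS : S.Nonempty) : ∃ x ∈ K, ∃ y ∈ S, G.Adj x y := by
  obtain ⟨x, hx⟩ := hKne
  obtain ⟨y, hy⟩ := hS
  obtain ⟨p⟩ := hG x y
  obtain ⟨e, -, he, he'⟩ := p.exists_boundary_dart K hx
    (disjoint_right.1 hK.disjoint hy)
  exact ⟨e.fst, he, e.snd, (hK.mem_or_mem he e.adj).resolve_left he', e.adj⟩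

theorem compl_union [Fintype V] [DecidableEq V] (hK : IsSealed G S K) :
    IsSealed G S (K ∪ S)ᶜ where
  disjoint := disjoint_left.2 fun x hx hxS ↦ mem_compl.1 hx (mem_union_right K hxS)
  mem_or_mem x y hx hxy := by
    by_contra! hy
    have hyK : y ∈ K := by simpa [hy.2] using hy.1
    exact mem_compl.1 hx (mem_union.2 (hK.mem_or_mem hyK hxy.symm))

theorem inter [DecidableEq V] {T R : Finset V} (hR : IsSealed G T R) (hK : IsSealed G S K)
    (hRS : Disjoint R S) : IsSealed G T (R ∩ K) where
  disjoint := disjoint_of_subset_left inter_subset_left hR.disjoint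
  mem_or_mem x y hx hxy := by
    rw [mem_inter] at hx ⊢
    refine (hR.mem_or_mem hx.1 hxy).imp_left fun hy ↦ ⟨hy, ?_⟩
    exact (hK.mem_or_mem hx.2 hxy).resolve_right (disjoint_left.1 hRS hy)

end IsSealed

theorem notMem_of_reachable_isolate (hx : x ∉ S) (h : (isolate G S).Reachable x y) : y ∉ S := by
  obtain ⟨p⟩ := h
  induction p with
  | nil => exact hx
  | cons huv _ ih => exact ih huv.2.2

open Classical in
/-- The vertex set of the component of `x` in `G - S`. -/
noncomputable def component [Fintype V] (G : SimpleGraph V) (S : Finset V) (x : V) : Finset V :=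
  {y | (isolate G S).Reachable x y}

variable [Fintype V]

theorem mem_component : y ∈ component G S x ↔ (isolate G S).Reachable x y := by
  simp [component]

theorem self_mem_component (G : SimpleGraph V) (S : Finset V) (x : V) : x ∈ component G S x :=
  mem_component.2 .rfl

theorem component_eq_of_reachable (h : (isolate G S).Reachable x y) :
    component G S x = component G S y := by
  ext w
  exact mem_component.trans (⟨h.symm.trans, h.trans⟩ : _ ↔ _) |>.trans mem_component.symm

theorem isSealed_component (hx : x ∉ S) : IsSealed G S (component G S x) where
  disjoint := disjoint_left.2 fun _ hy ↦ notMem_of_reachable_isolate hx (mem_component.1 hy)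
  mem_or_mem _ _ hy hyw := or_iff_not_imp_right.2 fun hw ↦ mem_component.2 <|
    (mem_component.1 hy).trans <| SimpleGraph.Adj.reachable
      ⟨hyw, notMem_of_reachable_isolate hx (mem_component.1 hy), hw⟩

end Sealed

section Cut

variable [Fintype V] [DecidableEq V] [DecidableRel G.Adj] {K : Finset V} {d : ℕ}
  (σ : G.Coloring ℤˣ)

include σ

omit [Fintype V] [DecidableEq V] [DecidableRel G.Adj] in
theorem coloring_eq_neg (h : G.Adj x y) : σ x = -σ y :=
  Int.units_ne_iff_eq_neg.1 (σ.valid h)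

theorem mul_sum_coloring_of_isSealed (hreg : G.IsRegularOfDegree d) (hK : IsSealed G S K) :
    (d : ℤ) * ∑ x ∈ K, (σ x : ℤ) = -∑ y ∈ S, (σ y : ℤ) * #(G.neighborFinset y ∩ K) := by
  set f : V → V → ℤ := fun x y ↦ if G.Adj x y then (σ x : ℤ) else 0 with hf
  have hanti (x y : V) : f x y = -f y x := by
    by_cases h : G.Adj x y
    · simp [hf, h, h.symm, coloring_eq_neg σ h]
    · simp [hf, h, mt SimpleGraph.Adj.symm h]
  have hrow (x : V) : ∑ y, f x y = d * (σ x : ℤ) := by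
    rw [← hreg x, ← G.card_neighborFinset_eq_degree, G.neighborFinset_eq_filter,
      ← sum_filter, sum_const, nsmul_eq_mul]
  have hsplit (x : V) (hx : x ∈ K) : ∑ y, f x y = ∑ y ∈ K, f x y + ∑ y ∈ S, f x y := by
    rw [← sum_union hK.disjoint]
    refine (sum_subset (subset_univ _) fun y _ hy ↦ if_neg fun hxy ↦ hy ?_).symm
    exact mem_union.2 (hK.mem_or_mem hx hxy)
  have hcol (y : V) : ∑ x ∈ K, f y x = (σ y : ℤ) * #(G.neighborFinset y ∩ K) := by
    rw [← sum_filter, sum_const, nsmul_eq_mul, mul_comm, G.neighborFinset_eq_filter,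
      filter_inter, univ_inter]
  have hinner : ∑ x ∈ K, ∑ y ∈ K, f x y = 0 := by
    have : ∑ x ∈ K, ∑ y ∈ K, f x y = -∑ x ∈ K, ∑ y ∈ K, f x y := by
      conv_lhs => rw [sum_comm]
      simp only [← sum_neg_distrib, ← hanti]
    linarith
  calc (d : ℤ) * ∑ x ∈ K, (σ x : ℤ) = ∑ x ∈ K, ∑ y, f x y := by simp only [mul_sum, hrow]
    _ = ∑ x ∈ K, ∑ y ∈ S, f x y := by
      rw [sum_congr rfl hsplit, sum_add_distrib, hinner, zero_add]
    _ = -∑ y ∈ S, (σ y : ℤ) * #(G.neighborFinset y ∩ K) := by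
      rw [sum_comm, ← sum_neg_distrib]
      refine sum_congr rfl fun y _ ↦ ?_
      rw [← hcol, ← sum_neg_distrib]
      exact sum_congr rfl fun x _ ↦ hanti x y

omit [DecidableEq V] in
theorem sum_coloring_eq_zero (hreg : G.IsRegularOfDegree d) (hd : d ≠ 0) :
    ∑ x, (σ x : ℤ) = 0 := by
  classical
  have h := mul_sum_coloring_of_isSealed (S := ∅) (K := univ) σ hreg
    ⟨disjoint_empty_right _, by simp⟩
  simpa [hd] using h

omit [DecidableEq V] in
theorem neighborFinset_subset_of_isSealed (hG : G.Connected) (hreg : G.IsRegularOfDegree d)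
    (hK : IsSealed G {z} K) (hKne : K.Nonempty) : G.neighborFinset z ⊆ K := by
  classical
  have hcut := mul_sum_coloring_of_isSealed σ hreg hK
  rw [sum_singleton] at hcut
  have hdvd : d ∣ #(G.neighborFinset z ∩ K) := by
    rw [← Int.natCast_dvd_natCast, ← (σ z).isUnit.dvd_mul_left, ← dvd_neg]
    exact ⟨_, hcut.symm⟩
  obtain ⟨x, hx, y, hy, hxy⟩ := hK.exists_adj hG hKne (singleton_nonempty z)
  rw [mem_singleton.1 hy] at hxy
  have hpos : 0 < #(G.neighborFinset z ∩ K) :=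
    card_pos.2 ⟨x, mem_inter.2 ⟨(G.mem_neighborFinset z x).2 hxy.symm, hx⟩⟩
  refine inter_eq_left.1 (eq_of_subset_of_card_le inter_subset_left ?_)
  rw [G.card_neighborFinset_eq_degree, hreg z]
  exact Nat.le_of_dvd hpos hdvd

omit [DecidableEq V] in
theorem reachable_isolate_singleton (hG : G.Connected) (hreg : G.IsRegularOfDegree d)
    (hx : x ≠ z) (hy : y ≠ z) : (isolate G {z}).Reachable x y := by
  classical
  have hx' := isSealed_component (G := G) (mt mem_singleton.1 hx)
  have hy' := isSealed_component (G := G) (mt mem_singleton.1 hy)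
  obtain ⟨v, -, w, hw, hvw⟩ := hx'.exists_adj hG ⟨x, self_mem_component G _ x⟩
    (singleton_nonempty z)
  rw [mem_singleton.1 hw] at hvw
  have hmem := (G.mem_neighborFinset z _).2 hvw.symm
  have hxv := neighborFinset_subset_of_isSealed σ hG hreg hx' ⟨x, self_mem_component G _ x⟩ hmem
  have hyv := neighborFinset_subset_of_isSealed σ hG hreg hy' ⟨y, self_mem_component G _ y⟩ hmem
  exact (mem_component.1 hxv).trans (mem_component.1 hyv).symm

end Cut

section ClosedNbhd

variable [Fintype V] [DecidableEq V] [DecidableRel G.Adj]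

/-- The closed neighbourhood `N[z]`. -/
def closedNbhd (G : SimpleGraph V) [DecidableRel G.Adj] (z : V) : Finset V :=
  insert z (G.neighborFinset z)

theorem mem_closedNbhd : x ∈ closedNbhd G z ↔ x = z ∨ G.Adj z x := by
  simp [closedNbhd]

theorem notMem_closedNbhd_of_adj (σ : G.Coloring ℤˣ) (hza : G.Adj z a) (hau : G.Adj a u)
    (hu : u ≠ z) : u ∉ closedNbhd G z := by
  intro h
  refine σ.valid ((mem_closedNbhd.1 h).resolve_left hu) ?_
  rw [coloring_eq_neg σ hza, coloring_eq_neg σ hau, neg_neg]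

variable {K : Finset V} {d : ℕ} (σ : G.Coloring ℤˣ)

include σ

theorem mul_sum_coloring_of_isSealed_closedNbhd (hreg : G.IsRegularOfDegree d) (hz : σ z = 1)
    (hK : IsSealed G (closedNbhd G z) K) :
    (d : ℤ) * ∑ x ∈ K, (σ x : ℤ) = ∑ y ∈ G.neighborFinset z, (#(G.neighborFinset y ∩ K) : ℤ) := by
  have hzK : G.neighborFinset z ∩ K = ∅ :=
    disjoint_iff_inter_eq_empty.1 (disjoint_of_subset_left (subset_insert _ _) hK.disjoint.symm)
  rw [mul_sum_coloring_of_isSealed σ hreg hK, closedNbhd, sum_insert (by simp), hzK, card_empty,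
    Nat.cast_zero, mul_zero, zero_add, ← sum_neg_distrib]
  refine sum_congr rfl fun y hy ↦ ?_
  rw [coloring_eq_neg σ ((G.mem_neighborFinset z y).1 hy).symm, hz]
  simp

theorem sum_coloring_pos_of_isSealed (hG : G.Connected) (hreg : G.IsRegularOfDegree d)
    (hz : σ z = 1) (hK : IsSealed G (closedNbhd G z) K) (hKne : K.Nonempty) :
    0 < ∑ x ∈ K, (σ x : ℤ) := by
  obtain ⟨x, hx, y, hy, hxy⟩ := hK.exists_adj hG hKne ⟨z, mem_insert_self z _⟩
  have hyz : G.Adj z y := by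
    refine (mem_closedNbhd.1 hy).resolve_left ?_
    rintro rfl
    exact disjoint_left.1 hK.disjoint hx (mem_closedNbhd.2 (.inr hxy.symm))
  refine pos_of_mul_pos_right (a := (d : ℤ)) ?_ d.cast_nonneg
  rw [mul_sum_coloring_of_isSealed_closedNbhd σ hreg hz hK]
  refine sum_pos' (fun _ _ ↦ Nat.cast_nonneg _) ⟨y, (G.mem_neighborFinset z y).2 hyz, ?_⟩
  exact Nat.cast_pos.2 (card_pos.2 ⟨x, mem_inter.2 ⟨(G.mem_neighborFinset y x).2 hxy.symm, hx⟩⟩)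

theorem sum_coloring_add_sum_coloring_compl (hreg : G.IsRegularOfDegree d) (hd : d ≠ 0)
    (hz : σ z = 1) (hK : IsSealed G (closedNbhd G z) K) :
    ∑ x ∈ K, (σ x : ℤ) + ∑ x ∈ (K ∪ closedNbhd G z)ᶜ, (σ x : ℤ) = d - 1 := by
  have hN : ∑ x ∈ closedNbhd G z, (σ x : ℤ) = 1 - d := by
    have hneg (y : V) (hy : y ∈ G.neighborFinset z) : (σ y : ℤ) = -1 := by
      simp [coloring_eq_neg σ ((G.mem_neighborFinset z y).1 hy).symm, hz]
    rw [closedNbhd, sum_insert (by simp), sum_congr rfl hneg, sum_const,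
      G.card_neighborFinset_eq_degree, hreg z, hz]
    simp [sub_eq_add_neg]
  have htotal := sum_add_sum_compl (K ∪ closedNbhd G z) (fun x ↦ (σ x : ℤ))
  rw [sum_union hK.disjoint, sum_coloring_eq_zero σ hreg hd, hN] at htotal
  linarith

end ClosedNbhd

section Scattered

variable [Fintype V] [DecidableEq V] [DecidableRel G.Adj]

/-- The neighbours of `a` other than `z` lie in pairwise distinct components of `G - N[z]`. -/
def IsScattered (G : SimpleGraph V) [DecidableRel G.Adj] (z a : V) : Prop :=
  ∀ ⦃u u'⦄, G.Adj a u → G.Adj a u' → u ≠ z → u' ≠ z →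
    (isolate G (closedNbhd G z)).Reachable u u' → u = u'

namespace IsScattered

theorem pairwiseDisjoint_component (ha : IsScattered G z a) :
    ((G.neighborFinset a).erase z : Set V).PairwiseDisjoint (component G (closedNbhd G z)) := by
  refine fun u hu u' hu' hne ↦ disjoint_left.2 fun y hy hy' ↦ hne ?_
  rw [mem_coe, mem_erase, G.mem_neighborFinset] at hu hu'
  exact ha hu.2 hu'.2 hu.1 hu'.1 ((mem_component.1 hy).trans (mem_component.1 hy').symm)

variable {d : ℕ} (σ : G.Coloring ℤˣ)

include σ

/-- The surplus of `G - N[z]` is `d - 1`, and it is used up by the `d - 1` components that meet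
the neighbourhood of `a`, since each component has positive surplus. -/
theorem exists_reachable_and_sum_component (ha : IsScattered G z a) (hza : G.Adj z a)
    (hG : G.Connected) (hreg : G.IsRegularOfDegree d) (hz : σ z = 1)
    (hx : x ∉ closedNbhd G z) :
    (∃ u, G.Adj a u ∧ u ≠ z ∧ (isolate G (closedNbhd G z)).Reachable u x) ∧
      ∑ y ∈ component G (closedNbhd G z) x, (σ y : ℤ) = 1 := by
  set S := closedNbhd G z with hS
  set T := (G.neighborFinset a).erase z with hT
  have hmemT {u : V} (hu : u ∈ T) : u ≠ z ∧ G.Adj a u := by simpa [hT] using hu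
  have hd : 0 < d := hreg a ▸ (G.degree_pos_iff_exists_adj a).2 ⟨z, hza.symm⟩
  have hTcard : (#T : ℤ) = d - 1 := by
    rw [hT, card_erase_of_mem ((G.mem_neighborFinset a z).2 hza.symm),
      G.card_neighborFinset_eq_degree, hreg a, Nat.cast_sub hd, Nat.cast_one]
  have hsealed (u : V) (hu : u ∈ T) : IsSealed G S (component G S u) :=
    isSealed_component (notMem_closedNbhd_of_adj σ hza (hmemT hu).2 (hmemT hu).1)
  have hone (u : V) (hu : u ∈ T) : 1 ≤ ∑ y ∈ component G S u, (σ y : ℤ) :=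
    sum_coloring_pos_of_isSealed σ hG hreg hz (hsealed u hu) ⟨u, self_mem_component G S u⟩
  have hunion := isSealed_biUnion hsealed
  have htotal := sum_coloring_add_sum_coloring_compl σ hreg hd.ne' hz hunion
  rw [sum_biUnion ha.pairwiseDisjoint_component, ← hS, ← hTcard, card_eq_sum_ones,
    Nat.cast_sum, Nat.cast_one] at htotal
  have hle := sum_le_sum hone
  have hrest : (T.biUnion (component G S) ∪ S)ᶜ = ∅ := by
    by_contra! hne
    linarith [sum_coloring_pos_of_isSealed σ hG hreg hz hunion.compl_union hne]
  have hall : ∑ _u ∈ T, (1 : ℤ) = ∑ u ∈ T, ∑ y ∈ component G S u, (σ y : ℤ) := by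
    rwa [hrest, sum_empty, add_zero, eq_comm] at htotal
  have hxT : x ∈ T.biUnion (component G S) :=
    (mem_union.1 ((compl_eq_empty_iff _).1 hrest ▸ mem_univ x)).resolve_right hx
  obtain ⟨u, hu, hxu⟩ := mem_biUnion.1 hxT
  refine ⟨⟨u, (hmemT hu).2, (hmemT hu).1, mem_component.1 hxu⟩, ?_⟩
  rw [← component_eq_of_reachable (mem_component.1 hxu)]
  exact ((sum_eq_sum_iff_of_le hone).1 hall u hu).symm

theorem exists_isSealed_disjoint_closedNbhd {z' : V} (ha : IsScattered G z' a)
    (hz'a : G.Adj z' a) (hG : G.Connected) (hreg : G.IsRegularOfDegree d) (hz' : σ z' = 1)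
    (hz : z ∉ closedNbhd G z') :
    ∃ R, IsSealed G (closedNbhd G z') R ∧ Disjoint R (closedNbhd G z) ∧
      ∑ x ∈ R, (σ x : ℤ) = d - 2 := by
  have hd : d ≠ 0 := (hreg a ▸ (G.degree_pos_iff_exists_adj a).2 ⟨z', hz'a.symm⟩).ne'
  have hC := isSealed_component (G := G) hz
  have hzC := self_mem_component G (closedNbhd G z') z
  refine ⟨_, hC.compl_union, disjoint_right.2 fun x hx hxR ↦ ?_, ?_⟩
  · refine mem_compl.1 hxR (mem_union.2 ?_)
    obtain rfl | hzx := mem_closedNbhd.1 hx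
    exacts [.inl hzC, hC.mem_or_mem hzC hzx]
  · linarith [sum_coloring_add_sum_coloring_compl σ hreg hd hz' hC,
      (ha.exists_reachable_and_sum_component σ hz'a hG hreg hz' hz).2]

end IsScattered

variable {d : ℕ}

theorem card_neighborFinset_inter_add_two_le {R : Finset V} {z' : V} (hyz : G.Adj y z)
    (hyz' : G.Adj y z') (hzz' : z ≠ z') (hz : z ∉ R) (hz' : z' ∉ R) :
    #(G.neighborFinset y ∩ R) + 2 ≤ G.degree y := by
  have hdisj : Disjoint (G.neighborFinset y ∩ R) {z, z'} := by simp [hz, hz']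
  have hsub : (G.neighborFinset y ∩ R) ∪ {z, z'} ⊆ G.neighborFinset y :=
    union_subset inter_subset_left (by simp [insert_subset_iff, hyz, hyz'])
  rw [← card_pair hzz', ← card_union_of_disjoint hdisj, ← G.card_neighborFinset_eq_degree]
  exact card_le_card hsub

variable (σ : G.Coloring ℤˣ)

include σ

omit [DecidableEq V] in
theorem exists_color_eq_one (hG : G.Connected) (hd : d ≠ 0) (hreg : G.IsRegularOfDegree d) :
    ∃ z, σ z = 1 := by
  obtain ⟨x⟩ := hG.nonempty
  obtain ⟨y, hxy⟩ := (G.degree_pos_iff_exists_adj x).1 (hreg x ▸ hd.pos)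
  obtain hx | hx := Int.units_eq_one_or (σ x)
  · exact ⟨x, hx⟩
  · exact ⟨y, by rw [coloring_eq_neg σ hxy.symm, hx, neg_neg]⟩

/-- The edges between `N(z')` and `R` number `d (d - 2)`, and a common neighbour of `z` and `z'` is
in at most `d - 2` of them, so that there are `d` common neighbours. -/
theorem neighborFinset_eq_of_isSealed {R : Finset V} {z z' : V} (hreg : G.IsRegularOfDegree d)
    (hd : 3 ≤ d) (hz' : σ z' = 1) (hzz' : z ≠ z')
    (hR : IsSealed G (closedNbhd G z') R) (hzR : z ∉ R) (hsum : ∑ x ∈ R, (σ x : ℤ) = d - 2)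
    (hadj : ∀ x ∈ R, ∀ y, G.Adj z' y → G.Adj x y → G.Adj z y) :
    G.neighborFinset z' = G.neighborFinset z := by
  set C := G.neighborFinset z' ∩ G.neighborFinset z
  have hzero (y : V) (hy : y ∈ G.neighborFinset z') (hyC : y ∉ C) :
      (#(G.neighborFinset y ∩ R) : ℤ) = 0 := by
    rw [Nat.cast_eq_zero, card_eq_zero, eq_empty_iff_forall_notMem]
    intro x hx
    rw [mem_inter, G.mem_neighborFinset] at hx
    refine hyC (mem_inter.2 ⟨hy, (G.mem_neighborFinset z y).2 ?_⟩)
    exact hadj x hx.2 y ((G.mem_neighborFinset z' y).1 hy) hx.1.symm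
  have hle (y : V) (hy : y ∈ C) : (#(G.neighborFinset y ∩ R) : ℤ) ≤ d - 2 := by
    rw [mem_inter, G.mem_neighborFinset, G.mem_neighborFinset] at hy
    have := card_neighborFinset_inter_add_two_le hy.2.symm hy.1.symm hzz' hzR
      (disjoint_right.1 hR.disjoint (mem_insert_self z' _))
    rw [hreg y] at this
    omega
  have hcut : (d : ℤ) * (d - 2) ≤ #C * (d - 2) :=
    calc (d : ℤ) * (d - 2) = ∑ y ∈ C, (#(G.neighborFinset y ∩ R) : ℤ) := by
          rw [← hsum, mul_sum_coloring_of_isSealed_closedNbhd σ hreg hz' hR,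
            sum_subset inter_subset_left hzero]
      _ ≤ #C * (d - 2) := by simpa using sum_le_card_nsmul C _ _ hle
  have hcard : d ≤ #C := by exact_mod_cast le_of_mul_le_mul_right hcut (by linarith)
  have hleft : C = G.neighborFinset z' := eq_of_subset_of_card_le inter_subset_left <| by
    rwa [G.card_neighborFinset_eq_degree, hreg z']
  have hright : C = G.neighborFinset z := eq_of_subset_of_card_le inter_subset_right <| by
    rwa [G.card_neighborFinset_eq_degree, hreg z]
  exact hleft.symm.trans hright

theorem exists_ssubset_isSealed_or_neighborFinset_eq {K : Finset V} (hG : G.Connected)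
    (hd : 3 ≤ d) (hreg : G.IsRegularOfDegree d) (hz : σ z = 1)
    (hscat : ∀ z, σ z = 1 → ∃ a, G.Adj z a ∧ IsScattered G z a)
    (hK : IsSealed G (closedNbhd G z) K) (hKne : K.Nonempty) :
    ∃ z', σ z' = 1 ∧ ((∃ K' ⊂ K, IsSealed G (closedNbhd G z') K' ∧ K'.Nonempty) ∨
      z' ≠ z ∧ G.neighborFinset z' = G.neighborFinset z) := by
  obtain ⟨z', hz'K, hz'⟩ : ∃ z' ∈ K, σ z' = 1 := by
    by_contra! h
    refine (sum_coloring_pos_of_isSealed σ hG hreg hz hK hKne).not_ge (sum_nonpos fun x hx ↦ ?_)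
    simp [(Int.units_eq_one_or (σ x)).resolve_left (h x hx)]
  have hKN (x : V) (hx : x ∈ K) : x ∉ closedNbhd G z := disjoint_left.1 hK.disjoint hx
  have hz'z : z' ≠ z := fun h ↦ hKN z' hz'K (mem_closedNbhd.2 (.inl h))
  have hzN : z ∉ closedNbhd G z' := by
    rw [mem_closedNbhd]
    rintro (h | h)
    exacts [hz'z h.symm, hKN z' hz'K (mem_closedNbhd.2 (.inr h.symm))]
  obtain ⟨a, hz'a, ha⟩ := hscat z' hz'
  obtain ⟨R, hR, hRN, hRsum⟩ :=
    ha.exists_isSealed_disjoint_closedNbhd σ hz'a hG hreg hz' hzN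
  have hz'R : z' ∉ R := disjoint_right.1 hR.disjoint (mem_insert_self z' _)
  refine ⟨z', hz', ?_⟩
  by_cases hRK : (R ∩ K).Nonempty
  · exact .inl ⟨R ∩ K, (ssubset_iff_of_subset inter_subset_right).2
      ⟨z', hz'K, fun h ↦ hz'R (mem_of_mem_inter_left h)⟩, hR.inter hK hRN, hRK⟩
  · refine .inr ⟨hz'z, neighborFinset_eq_of_isSealed σ hreg hd hz' hz'z.symm hR
      (disjoint_right.1 hRN (mem_insert_self z _)) hRsum fun x hx y hz'y hxy ↦ ?_⟩
    by_contra hzy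
    have hyN : y ∉ closedNbhd G z := by
      rw [mem_closedNbhd]
      rintro (rfl | h)
      exacts [hzN (mem_closedNbhd.2 (.inr hz'y)), hzy h]
    have hyK := (hK.mem_or_mem hz'K hz'y).resolve_right hyN
    have hxK := (hK.mem_or_mem hyK hxy.symm).resolve_right (disjoint_left.1 hRN hx)
    exact hRK ⟨x, mem_inter.2 ⟨hx, hxK⟩⟩

theorem exists_forall_not_isScattered_or_neighborFinset_eq (hG : G.Connected) (hd : 3 ≤ d)
    (hreg : G.IsRegularOfDegree d) :
    ∃ z, σ z = 1 ∧ ((∀ a, G.Adj z a → ¬ IsScattered G z a) ∨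
      ∃ z' ≠ z, G.neighborFinset z' = G.neighborFinset z) := by
  by_contra! h
  have hempty (K : Finset V) (z : V) (hz : σ z = 1) (hK : IsSealed G (closedNbhd G z) K) :
      K = ∅ := by
    induction K using Finset.strongInduction generalizing z with
    | H K ih =>
      by_contra! hKne
      obtain ⟨z', hz', ⟨K', hK'K, hK', hK'ne⟩ | htwin⟩ :=
        exists_ssubset_isSealed_or_neighborFinset_eq σ hG hd hreg hz (fun z hz ↦ (h z hz).1) hK hKne
      · exact hK'ne.ne_empty (ih K' hK'K z' hz' hK')
      · exact (h z hz).2 z' htwin.1 htwin.2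
  obtain ⟨z, hz⟩ := exists_color_eq_one σ hG (by omega) hreg
  have hbot : IsSealed G (closedNbhd G z) ∅ := ⟨disjoint_empty_left _, by simp⟩
  have hsum := sum_coloring_add_sum_coloring_compl σ hreg (by omega) hz hbot
  rw [hempty _ z hz hbot.compl_union, sum_empty] at hsum
  omega

end Scattered

section Rows

variable [Fintype V] [DecidableEq V] [DecidableRel G.Adj] {d : ℕ} {t : V → ZMod 2}

omit [DecidableEq V] in
theorem exists_adj_notMem {T : Finset V} (h : #T < G.degree x) : ∃ y, G.Adj x y ∧ y ∉ T := by
  obtain ⟨y, hy, hyT⟩ := exists_mem_notMem_of_card_lt_card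
    ((G.card_neighborFinset_eq_degree x).symm ▸ h)
  exact ⟨y, (G.mem_neighborFinset x y).1 hy, hyT⟩

variable (σ : G.Coloring ℤˣ)

include σ

theorem exists_boundary_eq_zero_of_not_isScattered (hza : G.Adj z a)
    (ha : ¬ IsScattered G z a) :
    ∃ F ∈ edgeSpace G, boundary F = 0 ∧ F z = 0 ∧ F a ≠ 0 ∧
      ∀ b, G.Adj z b → b ≠ a → F b = 0 := by
  simp only [IsScattered, not_forall] at ha
  obtain ⟨u, u', hu, hu', huz, hu'z, hreach, hne⟩ := ha
  have huN := notMem_closedNbhd_of_adj σ hza hu huz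
  have hu'N := notMem_closedNbhd_of_adj σ hza hu' hu'z
  obtain ⟨J, hJ, hJb⟩ := exists_boundary_eq_of_reachable hreach
  have hT (b : V) (hb : b ∈ closedNbhd G z) : b ∉ ({u, u'} : Finset V) := by
    rw [mem_insert, mem_singleton]
    rintro (rfl | rfl)
    exacts [huN hb, hu'N hb]
  have haN : a ∈ closedNbhd G z := mem_closedNbhd.2 (.inr hza)
  have hrow (b : V) (hb : b ∈ closedNbhd G z) (hba : b ≠ a) : (spokes a {u, u'} + J) b = 0 := by
    rw [Pi.add_apply, apply_eq_zero_of_mem_isolate hJ hb, add_zero,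
      spokes_apply_of_notMem hba (hT b hb)]
  refine ⟨spokes a {u, u'} + J, add_mem (spokes_mem_edgeSpace (by simp [hu, hu']))
    (edgeSpace_mono (isolate_le G _) hJ), ?_, hrow z (mem_insert_self z _) hza.ne, fun h ↦ ?_,
    fun b hb hba ↦ hrow b (mem_closedNbhd.2 (.inr hb)) hba⟩
  · rw [map_add, boundary_spokes (hT a haN), hJb, card_pair hne, sum_pair hne, ZMod.natCast_self,
      Pi.single_zero, zero_add, ZModModule.add_self]
  · rw [Pi.add_apply, apply_eq_zero_of_mem_isolate hJ haN, add_zero] at h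
    exact one_ne_zero ((spokes_apply_of_mem (mem_insert_self u {u'})).symm.trans (congrFun h u))

theorem exists_boundary_eq_of_forall_not_isScattered (hG : G.Connected)
    (hreg : G.IsRegularOfDegree d) (hz : ∀ a, G.Adj z a → ¬ IsScattered G z a)
    (ht : ∑ x, t x = 0) (htz : t z = 0) :
    ∃ F ∈ edgeSpace G, boundary F = t ∧ F z = 0 ∧ ∀ a, G.Adj z a → F a ≠ 0 := by
  suffices h : ∀ T : Finset V, (∀ a ∈ T, G.Adj z a) →
      ∃ F ∈ edgeSpace G, boundary F = t ∧ F z = 0 ∧ ∀ a ∈ T, F a ≠ 0 by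
    simpa using h (G.neighborFinset z) (by simp)
  intro T
  induction T using Finset.induction_on with
  | empty =>
    obtain ⟨F, hF, hFb, hFz⟩ := exists_boundary_eq_of_eqOn (S := {z}) (t := t)
      (fun x y hx hy ↦ reachable_isolate_singleton σ hG hreg (mt mem_singleton.2 hx)
        (mt mem_singleton.2 hy)) (zero_mem (edgeSpace G)) ht (by simp [htz])
    exact fun _ ↦ ⟨F, hF, hFb, hFz z (mem_singleton_self z), by simp⟩
  | insert a T haT ih =>
    intro hT
    rw [forall_mem_insert] at hT
    obtain ⟨F, hF, hFb, hFz, hFT⟩ := ih hT.2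
    by_cases hFa : F a = 0
    · obtain ⟨Z, hZ, hZb, hZz, hZa, hZT⟩ :=
        exists_boundary_eq_zero_of_not_isScattered σ hT.1 (hz a hT.1)
      refine ⟨F + Z, add_mem hF hZ, by rw [map_add, hFb, hZb, add_zero],
        by rw [Pi.add_apply, hFz, hZz, add_zero], (forall_mem_insert _ _ _).2 ⟨?_, fun b hb ↦ ?_⟩⟩
      · rwa [Pi.add_apply, hFa, zero_add]
      · rw [Pi.add_apply, hZT b (hT.2 b hb) (ne_of_mem_of_not_mem hb haT), add_zero]
        exact hFT b hb
    · exact ⟨F, hF, hFb, hFz, (forall_mem_insert _ _ _).2 ⟨hFa, hFT⟩⟩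

theorem reachable_isolate_of_isScattered {z' : V} (hG : G.Connected) (hd : 3 ≤ d)
    (hreg : G.IsRegularOfDegree d) (hz : σ z = 1) (hza : G.Adj z a) (ha : IsScattered G z a)
    (htwin : ∀ y, G.Adj z' y ↔ G.Adj z y) (hzS : z ∈ S) (hz'S : z' ∈ S) (haS : a ∉ S)
    (hS : ∀ x ∈ S, x = z ∨ x = z' ∨ G.Adj z x) (hx : x ∉ S) : (isolate G S).Reachable x a := by
  have hle : isolate G (closedNbhd G z) ≤ isolate G S := by
    have hnot (x y : V) (h : (isolate G (closedNbhd G z)).Adj x y) : x ∉ S := by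
      intro hxS
      obtain rfl | rfl | hzx := hS x hxS
      · exact h.2.1 (mem_closedNbhd.2 (.inl rfl))
      · exact h.2.2 (mem_closedNbhd.2 (.inr ((htwin y).1 h.1)))
      · exact h.2.1 (mem_closedNbhd.2 (.inr hzx))
    exact fun x y h ↦ ⟨h.1, hnot x y h, hnot y x h.symm⟩
  have hfar {x : V} (hxS : x ∉ S) (hxN : x ∉ closedNbhd G z) : (isolate G S).Reachable x a := by
    obtain ⟨u, hau, -, hux⟩ :=
      (ha.exists_reachable_and_sum_component σ hza hG hreg hz hxN).1
    have hxu := (hux.mono hle).symm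
    exact hxu.trans (SimpleGraph.Adj.reachable
      ⟨hau.symm, notMem_of_reachable_isolate hxS hxu, haS⟩)
  by_cases hxN : x ∈ closedNbhd G z
  · have hzx : G.Adj z x := (mem_closedNbhd.1 hxN).resolve_left fun h ↦ hx (h ▸ hzS)
    obtain ⟨y, hxy, hy⟩ := exists_adj_notMem (T := {z, z'}) (x := x)
      (card_le_two.trans_lt (hreg x ▸ hd))
    rw [mem_insert, mem_singleton, not_or] at hy
    have hyN := notMem_closedNbhd_of_adj σ hzx hxy hy.1
    have hyS : y ∉ S := fun h ↦ by
      obtain h | h | h := hS y h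
      exacts [hy.1 h, hy.2 h, hyN (mem_closedNbhd.2 (.inr h))]
    exact (SimpleGraph.Adj.reachable ⟨hxy, hx, hyS⟩ : (isolate G S).Reachable x y).trans
      (hfar hyS hyN)
  · exact hfar hx hxN

section Twin

variable {z' : V} (htwin : ∀ y, G.Adj z' y ↔ G.Adj z y)

include htwin

theorem exists_boundary_eq_of_isScattered_of_eqOn {F₀ : V → V → ZMod 2} (hG : G.Connected)
    (hd : 3 ≤ d) (hreg : G.IsRegularOfDegree d) (hz : σ z = 1) (hza : G.Adj z a)
    (ha : IsScattered G z a) (hzS : z ∈ S) (hz'S : z' ∈ S) (haS : a ∉ S)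
    (hS : ∀ x ∈ S, x = z ∨ x = z' ∨ G.Adj z x)
    (ht : ∑ x, t x = 0) (hF₀ : F₀ ∈ edgeSpace G) (htS : ∀ x ∈ S, boundary F₀ x = t x)
    (hF₀z : F₀ z = 0) (hrow : ∀ b, G.Adj z b → F₀ z' b ≠ 0 ∨ b ∈ S ∧ F₀ b ≠ 0) :
    ∃ F ∈ edgeSpace G, boundary F = t ∧ F z = 0 ∧ ∀ b, G.Adj z b → F b ≠ 0 := by
  have hreach {x : V} (hx : x ∉ S) : (isolate G S).Reachable x a :=
    reachable_isolate_of_isScattered σ hG hd hreg hz hza ha htwin hzS hz'S haS hS hx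
  obtain ⟨F, hF, hFb, hFS⟩ := exists_boundary_eq_of_eqOn
    (fun x y hx hy ↦ (hreach hx).trans (hreach hy).symm) hF₀ ht htS
  refine ⟨F, hF, hFb, (hFS z hzS).trans hF₀z, fun b hzb hb ↦ ?_⟩
  obtain hz'b | ⟨hbS, hb'⟩ := hrow b hzb
  · rw [← hFS z' hz'S, hF.1 z' b] at hz'b
    exact hz'b (congrFun hb z')
  · exact hb' ((hFS b hbS).symm.trans hb)

omit σ [DecidableEq V] in
/-- The neighbour `b` of `z` is left out of the spokes at `z'` to make their number odd. -/
theorem exists_boundary_eq_one_of_even (hd : 4 ≤ d) (heven : Even d)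
    (hreg : G.IsRegularOfDegree d) (hzz' : z ≠ z') (hzb : G.Adj z b) :
    ∃ F ∈ edgeSpace G, boundary F z' = 1 ∧ boundary F b = 0 ∧ F z = 0 ∧ F b ≠ 0 ∧
      ∀ c, G.Adj z c → c ≠ b → F z' c ≠ 0 := by
  classical
  obtain ⟨u, hbu, hu⟩ := exists_adj_notMem (T := {z, z'}) (x := b)
    (card_le_two.trans_lt (by rw [hreg b]; omega))
  obtain ⟨u', hbu', hu'⟩ := exists_adj_notMem (T := {z, z', u}) (x := b)
    (card_le_three.trans_lt (by rw [hreg b]; omega))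
  simp only [mem_insert, mem_singleton, not_or] at hu hu'
  have hz'b : z' ≠ b := ((htwin b).2 hzb).ne
  set N := (G.neighborFinset z).erase b with hN
  set F := spokes z' N + spokes b {u, u'} with hF
  have hz'N : z' ∉ N := by simp [hN, ← htwin]
  have hbU : b ∉ ({u, u'} : Finset V) := by simp [hbu.ne, hbu'.ne]
  have hrow_z : F z = 0 := by
    rw [hF, Pi.add_apply, spokes_apply_of_notMem hzz' (by simp [hN]),
      spokes_apply_of_notMem hzb.ne (by simp [Ne.symm hu.1, Ne.symm hu'.1]), add_zero]
  have hrow_z' : F z' = spokes z' N z' := by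
    rw [hF, Pi.add_apply, spokes_apply_of_notMem hz'b
      (by simp [Ne.symm hu.2, Ne.symm hu'.2.1]), add_zero]
  have hrow_b : F b = spokes b {u, u'} b := by
    rw [hF, Pi.add_apply, spokes_apply_of_notMem hz'b.symm (by simp [hN]), zero_add]
  refine ⟨F, add_mem (spokes_mem_edgeSpace (by simp [hN, htwin]))
    (spokes_mem_edgeSpace (by simp [hbu, hbu'])), ?_, ?_, hrow_z, ?_, fun c hzc hcb ↦ ?_⟩
  · rw [boundary_apply, hrow_z', ← boundary_apply, boundary_spokes_apply_center hz'N,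
      ZMod.natCast_eq_one_iff_odd, hN, card_erase_of_mem (by simpa using hzb),
      G.card_neighborFinset_eq_degree, hreg z]
    exact Nat.Even.sub_odd (by omega) heven odd_one
  · rw [boundary_apply, hrow_b, ← boundary_apply, boundary_spokes_apply_center hbU,
      card_pair (Ne.symm hu'.2.2), ZMod.natCast_self]
  · rw [hrow_b]
    exact Function.ne_iff.2 ⟨u, by rw [spokes_apply_of_mem (by simp)]; exact one_ne_zero⟩
  · rw [hrow_z', spokes_apply_of_mem (by simp [hN, hcb, hzc])]
    exact one_ne_zero

theorem exists_boundary_eq_of_isScattered (hG : G.Connected) (hd : 3 ≤ d)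
    (hreg : G.IsRegularOfDegree d) (hz : σ z = 1) (hza : G.Adj z a) (ha : IsScattered G z a)
    (hzz' : z ≠ z') (ht : ∑ x, t x = 0) (htz : t z = 0) (htz' : t z' = 1)
    (htN : ∀ b, G.Adj z b → t b = 0) :
    ∃ F ∈ edgeSpace G, boundary F = t ∧ F z = 0 ∧ ∀ b, G.Adj z b → F b ≠ 0 := by
  have hz'a : G.Adj z' a := (htwin a).2 hza
  obtain heven | hodd := d.even_or_odd
  · obtain ⟨b, hzb, hba⟩ := exists_adj_notMem (T := {a}) (x := z)
      (by rw [card_singleton, hreg z]; omega)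
    rw [mem_singleton] at hba
    have hd4 : 4 ≤ d := by grind
    obtain ⟨F, hF, hFz', hFb, hFz, hrow_b, hrow⟩ :=
      exists_boundary_eq_one_of_even htwin hd4 heven hreg hzz' hzb
    refine exists_boundary_eq_of_isScattered_of_eqOn (S := {z, z', b}) σ htwin hG hd hreg hz hza
      ha (by simp) (by simp) (by simp [hza.ne', hz'a.ne', Ne.symm hba]) (by simp [hzb]) ht hF ?_ hFz
      fun c hzc ↦ ?_
    · simp [boundary_apply_eq_zero hFz, htz, hFz', htz', hFb, htN b hzb]
    · obtain rfl | hcb := eq_or_ne c b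
      exacts [.inr ⟨by simp, hrow_b⟩, .inl (hrow c hzc hcb)]
  · have hFz : spokes z' (G.neighborFinset z) z = 0 := spokes_apply_of_notMem hzz' (by simp)
    have hFz' : boundary (spokes z' (G.neighborFinset z)) z' = 1 := by
      rw [boundary_spokes_apply_center (by simp [← htwin]), G.card_neighborFinset_eq_degree,
        hreg z, ZMod.natCast_eq_one_iff_odd.2 hodd]
    refine exists_boundary_eq_of_isScattered_of_eqOn (S := {z, z'}) σ htwin hG hd hreg hz hza
      ha (by simp) (by simp) (by simp [hza.ne', hz'a.ne']) (by simp +contextual [or_imp]) ht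
      (spokes_mem_edgeSpace (by simp [htwin])) ?_ hFz fun c hzc ↦ .inl ?_
    · simp [boundary_apply_eq_zero hFz, htz, hFz', htz']
    · rw [spokes_apply_of_mem (by simpa using hzc)]
      exact one_ne_zero

end Twin

end Rows

section Connected

variable [Fintype V]

theorem natCast_sum_val (F : V → V → ZMod 2) (x : V) :
    ((∑ y, (F x y).val : ℕ) : ZMod 2) = boundary F x := by
  simp [boundary_apply]

theorem sum_val_ne_of_boundary_ne {F : V → V → ZMod 2} (h : boundary F u ≠ boundary F v) :
    ∑ x, (F u x).val ≠ ∑ x, (F v x).val := by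
  rw [← natCast_sum_val, ← natCast_sum_val] at h
  exact fun he ↦ h (congrArg Nat.cast he)

theorem sum_val_ne_of_row_eq_zero {F : V → V → ZMod 2} (hu : F u = 0) (hv : F v ≠ 0) :
    ∑ x, (F u x).val ≠ ∑ x, (F v x).val := by
  obtain ⟨y, hy⟩ := Function.ne_iff.1 hv
  have hpos : 0 < ∑ x, (F v x).val := sum_pos' (fun _ _ ↦ Nat.zero_le _)
    ⟨y, mem_univ y, Nat.pos_of_ne_zero (mt (ZMod.val_eq_zero _).1 hy)⟩
  simpa [hu] using hpos.ne

variable [DecidableEq V] [DecidableRel G.Adj] {d : ℕ} (σ : G.Coloring ℤˣ)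

include σ

theorem exists_boundary_eq_and_rows_ne_zero {t : V → ZMod 2} (hG : G.Connected) (hd : 3 ≤ d)
    (hreg : G.IsRegularOfDegree d) (ht : ∀ x, t x = if σ x = 1 then 1 else 0)
    (hsum : ∑ x, t x = 1) :
    ∃ z, ∃ F ∈ edgeSpace G, boundary F = t + Pi.single z 1 ∧ F z = 0 ∧
      ∀ a, G.Adj z a → F a ≠ 0 := by
  obtain ⟨z, hz, hz'⟩ := exists_forall_not_isScattered_or_neighborFinset_eq σ hG hd hreg
  set s : V → ZMod 2 := t + Pi.single z 1 with hs
  have hs_sum : ∑ x, s x = 0 := by simp [hs, sum_add_distrib, hsum, CharTwo.add_self_eq_zero]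
  have hs_z : s z = 0 := by simp [hs, ht, hz, CharTwo.add_self_eq_zero]
  refine ⟨z, ?_⟩
  by_cases hscat : ∀ a, G.Adj z a → ¬ IsScattered G z a
  · exact exists_boundary_eq_of_forall_not_isScattered σ hG hreg hscat hs_sum hs_z
  · obtain ⟨z', hne, htwin⟩ := hz'.resolve_left hscat
    push Not at hscat
    obtain ⟨a, hza, ha⟩ := hscat
    have htwin' (y : V) : G.Adj z' y ↔ G.Adj z y := by
      rw [← G.mem_neighborFinset, htwin, G.mem_neighborFinset]
    have hz'1 : σ z' = 1 := by
      rw [coloring_eq_neg σ ((htwin' a).2 hza), ← coloring_eq_neg σ hza, hz]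
    have hs_z' : s z' = 1 := by simp [hs, ht, hz'1, hne]
    refine exists_boundary_eq_of_isScattered σ htwin' hG hd hreg hz hza ha hne.symm hs_sum hs_z
      hs_z' fun b hzb ↦ ?_
    simp [ht, coloring_eq_neg σ hzb.symm, hz, hzb.ne', show (-1 : ℤˣ) ≠ 1 by decide]

omit [DecidableEq V] in
theorem exists_sum_val_ne_of_connected (hG : G.Connected) (hd : 3 ≤ d)
    (hreg : G.IsRegularOfDegree d) :
    ∃ F ∈ edgeSpace G, ∀ u v, G.Adj u v → ∑ x, (F u x).val ≠ ∑ x, (F v x).val := by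
  classical
  set t : V → ZMod 2 := fun x ↦ if σ x = 1 then 1 else 0 with ht
  have htne {u v : V} (h : G.Adj u v) : t u ≠ t v := by
    obtain hv | hv := Int.units_eq_one_or (σ v) <;>
      simp [ht, coloring_eq_neg σ h, hv, show (-1 : ℤˣ) ≠ 1 by decide]
  obtain hsum | hsum : ∑ x, t x = 0 ∨ ∑ x, t x = 1 := by
    generalize ∑ x, t x = s
    decide +revert
  · obtain ⟨F, hF, hFb⟩ := exists_boundary_eq hsum fun x y _ _ ↦ hG x y
    exact ⟨F, hF, fun u v h ↦ sum_val_ne_of_boundary_ne (hFb ▸ htne h)⟩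
  · obtain ⟨z, F, hF, hFb, hFz, hrow⟩ :=
      exists_boundary_eq_and_rows_ne_zero σ hG hd hreg (fun _ ↦ rfl) hsum
    refine ⟨F, hF, fun u v h ↦ ?_⟩
    obtain rfl | hu := eq_or_ne u z
    · exact sum_val_ne_of_row_eq_zero hFz (hrow v h)
    obtain rfl | hv := eq_or_ne v z
    · exact (sum_val_ne_of_row_eq_zero hFz (hrow u h.symm)).symm
    · refine sum_val_ne_of_boundary_ne ?_
      simpa [hFb, hu, hv] using htne h

end Connected

section Components

theorem exists_mem_edgeSpace_forall_component
    {F : ∀ C : G.ConnectedComponent, C → C → ZMod 2}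
    (hF : ∀ C, F C ∈ edgeSpace C.toSimpleGraph) :
    ∃ E ∈ edgeSpace G, ∀ (C : G.ConnectedComponent) (u v : C), E u v = F C u v := by
  classical
  let E : V → V → ZMod 2 := fun u v ↦
    if h : v ∈ G.connectedComponentMk u then F (G.connectedComponentMk u) ⟨u, rfl⟩ ⟨v, h⟩ else 0
  have hE (C : G.ConnectedComponent) (u v : C) : E u v = F C u v := by
    obtain ⟨u, rfl⟩ := u
    exact dif_pos v.2
  have hE₀ {u v : V} (h : v ∉ G.connectedComponentMk u) : E u v = 0 := dif_neg h
  refine ⟨E, ⟨fun u v ↦ ?_, fun u v huv ↦ ?_⟩, hE⟩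
  · by_cases h : v ∈ G.connectedComponentMk u
    · exact (hE _ ⟨u, rfl⟩ ⟨v, h⟩).trans (((hF _).1 _ _).trans (hE _ ⟨v, h⟩ ⟨u, rfl⟩).symm)
    · rw [hE₀ h, hE₀ fun h' ↦ h (Eq.symm h')]
  · have h : v ∈ G.connectedComponentMk u := by_contra fun h ↦ huv (hE₀ h)
    rw [hE _ ⟨u, rfl⟩ ⟨v, h⟩] at huv
    exact (hF _).2 _ _ huv

variable [Fintype V] [DecidableRel G.Adj] {d : ℕ}

theorem isRegularOfDegree_toSimpleGraph (hreg : G.IsRegularOfDegree d) (C : G.ConnectedComponent)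
    [Fintype C] [DecidableRel C.toSimpleGraph.Adj] : C.toSimpleGraph.IsRegularOfDegree d := by
  classical
  intro v
  rw [← hreg v]
  have h : G.neighborSet v ⊆ C.supp := fun _ hvw ↦ C.mem_supp_of_adj_mem_supp v.2 hvw
  refine Eq.trans ?_ (SimpleGraph.degree_induce_of_neighborSet_subset (v := v) h)
  exact congrArg (fun i ↦ @SimpleGraph.degree _ C.toSimpleGraph v i) (Subsingleton.elim _ _)

theorem exists_sum_val_ne (hd : 3 ≤ d) (hreg : G.IsRegularOfDegree d) (hbip : G.Colorable 2) :
    ∃ F ∈ edgeSpace G, ∀ u v, G.Adj u v → ∑ x, (F u x).val ≠ ∑ x, (F v x).val := by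
  classical
  let σ : G.Coloring ℤˣ := hbip.toColoring (Fintype.card_units_int).ge
  choose F hF hFne using fun C : G.ConnectedComponent ↦
    exists_sum_val_ne_of_connected (σ.comp C.toSimpleGraph_hom) C.connected_toSimpleGraph hd
      (isRegularOfDegree_toSimpleGraph hreg C)
  obtain ⟨E, hE, hEF⟩ := exists_mem_edgeSpace_forall_component hF
  have hsum (C : G.ConnectedComponent) (u : C) : ∑ x, (F C u x).val = ∑ x, (E u x).val := by
    refine Fintype.sum_of_injective _ Subtype.val_injective _ _ (fun x hx ↦ ?_)
      fun x ↦ by rw [hEF]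
    rw [apply_eq_zero_of_not_adj hE fun hux ↦ hx ⟨⟨x, C.mem_supp_of_adj_mem_supp u.2 hux⟩, rfl⟩,
      ZMod.val_zero]
  refine ⟨E, hE, fun u v huv ↦ ?_⟩
  set C := G.connectedComponentMk u
  have hv : v ∈ C := C.mem_supp_of_adj_mem_supp rfl huv
  rw [← hsum C ⟨u, rfl⟩, ← hsum C ⟨v, hv⟩]
  exact hFne C _ _ huv

end Components

end RegularBipartite

/-- If `G` is a `d`-regular bipartite graph with `d ≥ 3`, then `χ^e_Σ(G) ≤ 2`:
there is an edge weighting with weights in `{1,2}` such that adjacent vertices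
receive distinct sums of incident edge weights. -/
theorem regular_bipartite_sum_two_weighting {V : Type*} [Fintype V] [DecidableEq V]
    (G : SimpleGraph V) [DecidableRel G.Adj] (d : ℕ) (hd : 3 ≤ d)
    (hreg : ∀ v, G.degree v = d) (hbip : G.Colorable 2) :
    ∃ w : V → V → ℕ,
      (∀ u v, w u v = w v u) ∧
      (∀ u v, G.Adj u v → w u v ∈ ({1, 2} : Set ℕ)) ∧
      (∀ u v, G.Adj u v →
        (∑ x ∈ G.neighborFinset u, w u x) ≠ (∑ x ∈ G.neighborFinset v, w v x)) := by
  obtain ⟨F, hF, hFne⟩ := RegularBipartite.exists_sum_val_ne hd hreg hbip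
  have hsum (u : V) : ∑ x ∈ G.neighborFinset u, (1 + (F u x).val) = d + ∑ x, (F u x).val := by
    rw [sum_add_distrib, ← card_eq_sum_ones, G.card_neighborFinset_eq_degree, hreg u]
    refine congrArg (d + ·) (sum_subset (subset_univ _) fun x _ hx ↦ ?_)
    rw [RegularBipartite.apply_eq_zero_of_not_adj hF (mt (G.mem_neighborFinset u x).2 hx),
      ZMod.val_zero]
  refine ⟨fun u v ↦ 1 + (F u v).val, fun u v ↦ by simp only [hF.1 u v], fun u v _ ↦ ?_,
    fun u v huv ↦ ?_⟩
  · have hlt := ZMod.val_lt (F u v)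
    simp only [Set.mem_insert_iff, Set.mem_singleton_iff]
    omega
  · simp only [hsum]
    exact fun h ↦ hFne u v huv (Nat.add_left_cancel h)
end
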